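/- arXiv:2310.19215 — 6 statements merged into one kernel-verified Lean document; each statement's English description precedes it below -/
import Mathlib

section
/- There exist per-sample gradients g_i, g_j ∈ ℝ × ℝ (two groups, each of dimension one) and an all-layer threshold R > 0 (e.g. g_i = (3,4), g_j = (6,0), R = 4) such that for every choice of group-wise thresholds R₁ ≥ 0 and R₂ ≥ 0, the group-wise Abadi clipping fails to reproduce the all-layer Abadi clipping on at least one of the two samples: it is not the case that simultaneously min(1, R_m/|g_i^{(m)}|)·g_i^{(m)} = min(1, R/‖g_i‖)·g_i^{(m)} for m = 1,2 and min(1, R_m/|g_j^{(m)}|)·g_j^{(m)} = min(1, R/‖g_j‖)·g_j^{(m)} for m = 1,2. -/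
/-- **All-layer Abadi clipping is not reproducible by group-wise Abadi clipping.**
There exist per-sample gradients `gᵢ = (gi₁, gi₂)`, `gⱼ = (gj₁, gj₂) ∈ ℝ × ℝ` (two groups,
each of dimension one) and an all-layer threshold `R > 0` such that for every choice of
group-wise thresholds `R₁ ≥ 0`, `R₂ ≥ 0`, the group-wise Abadi clipping fails to reproduce
the all-layer Abadi clipping on at least one of the two samples. -/
theorem stmt_0 :
    ∃ (gi₁ gi₂ gj₁ gj₂ R : ℝ), 0 < R ∧
      ∀ R₁ R₂ : ℝ, 0 ≤ R₁ → 0 ≤ R₂ →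
        ¬ (min 1 (R₁ / |gi₁|) * gi₁ = min 1 (R / Real.sqrt (gi₁ ^ 2 + gi₂ ^ 2)) * gi₁ ∧
           min 1 (R₂ / |gi₂|) * gi₂ = min 1 (R / Real.sqrt (gi₁ ^ 2 + gi₂ ^ 2)) * gi₂ ∧
           min 1 (R₁ / |gj₁|) * gj₁ = min 1 (R / Real.sqrt (gj₁ ^ 2 + gj₂ ^ 2)) * gj₁ ∧
           min 1 (R₂ / |gj₂|) * gj₂ = min 1 (R / Real.sqrt (gj₁ ^ 2 + gj₂ ^ 2)) * gj₂) := by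
  refine ⟨3, 4, 6, 0, 4, by norm_num, ?_⟩
  rintro R₁ R₂ - - ⟨h₁, -, h₂, -⟩
  have e₁ : Real.sqrt ((3 : ℝ) ^ 2 + 4 ^ 2) = 5 := by
    rw [Real.sqrt_eq_iff_eq_sq] <;> norm_num
  have e₂ : Real.sqrt ((6 : ℝ) ^ 2 + 0 ^ 2) = 6 := by
    rw [Real.sqrt_eq_iff_eq_sq] <;> norm_num
  rw [e₁, abs_of_pos (by norm_num), min_eq_right (by norm_num : (4 : ℝ) / 5 ≤ 1)] at h₁
  rw [e₂, abs_of_pos (by norm_num), min_eq_right (by norm_num : (4 : ℝ) / 6 ≤ 1)] at h₂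
  -- The first components alone conflict: the sample (3, 4) forces R₁ = 12 / 5,
  -- whereas the sample (6, 0) forces R₁ = 4.
  rcases min_choice 1 (R₁ / 3) with h | h <;> rcases min_choice 1 (R₁ / 6) with h' | h' <;>
    rw [h] at h₁ <;> rw [h'] at h₂ <;> linarith
end

section
/- Let E₁ and E₂ be real inner product spaces and let g₁ = (g₁^{(1)}, g₁^{(2)}) and g₂ = (g₂^{(1)}, g₂^{(2)}) be elements of E₁ × E₂ with g₁^{(1)} ≠ 0, ‖g₁^{(1)}‖ < ‖g₂^{(1)}‖, and ‖g₂‖ < R < ‖g₁‖. Then for every R₁ ≥ 0, at least one of the following holds: (a) min(1, R₁/‖g₁^{(1)}‖)·g₁^{(1)} ≠ (R/‖g₁‖)·g₁^{(1)} (the first group of sample 1 is not clipped the same way as under all-layer clipping, which scales it by R/‖g₁‖ < 1), or (b) min(1, R₁/‖g₂^{(1)}‖)·g₂^{(1)} ≠ g₂^{(1)} (the first group of sample 2 is modified, whereas all-layer clipping leaves g₂ unchanged since ‖g₂‖ < R). -/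
/-- **Two-group counter-example, abstract version.** Let `E₁`, `E₂` be real inner product
spaces and `g₁ = (g₁₁, g₁₂)`, `g₂ = (g₂₁, g₂₂) ∈ E₁ × E₂` with `g₁₁ ≠ 0`,
`‖g₁₁‖ < ‖g₂₁‖` and `‖g₂‖ < R < ‖g₁‖` (the ℓ²-product norm `‖g‖ = √(‖g⁽¹⁾‖² + ‖g⁽²⁾‖²)`).
Then for every `R₁ ≥ 0`, either the first group of sample 1 is not clipped as under
all-layer clipping (which scales it by `R/‖g₁‖ < 1`), or the first group of sample 2
is modified (whereas all-layer clipping leaves `g₂` unchanged since `‖g₂‖ < R`). -/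
theorem stmt_1 {E₁ E₂ : Type*} [NormedAddCommGroup E₁] [InnerProductSpace ℝ E₁]
    [NormedAddCommGroup E₂] [InnerProductSpace ℝ E₂]
    (g₁₁ : E₁) (g₁₂ : E₂) (g₂₁ : E₁) (g₂₂ : E₂) (R : ℝ)
    (hne : g₁₁ ≠ 0)
    (hlt : ‖g₁₁‖ < ‖g₂₁‖)
    (hR₂ : Real.sqrt (‖g₂₁‖ ^ 2 + ‖g₂₂‖ ^ 2) < R)
    (hR₁ : R < Real.sqrt (‖g₁₁‖ ^ 2 + ‖g₁₂‖ ^ 2)) :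
    ∀ R₁ : ℝ, 0 ≤ R₁ →
      (min 1 (R₁ / ‖g₁₁‖) • g₁₁ ≠ (R / Real.sqrt (‖g₁₁‖ ^ 2 + ‖g₁₂‖ ^ 2)) • g₁₁) ∨
      (min 1 (R₁ / ‖g₂₁‖) • g₂₁ ≠ g₂₁) := by
  intro R₁ _
  by_contra! h
  obtain ⟨h₁, h₂⟩ := h
  have ha : 0 < ‖g₁₁‖ := norm_pos_iff.mpr hne
  have hb : 0 < ‖g₂₁‖ := ha.trans hlt
  have hS : 0 < Real.sqrt (‖g₁₁‖ ^ 2 + ‖g₁₂‖ ^ 2) :=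
    (Real.sqrt_nonneg _).trans_lt (hR₂.trans hR₁)
  -- Sample 1 is strictly shrunk, which forces `R₁ < ‖g₁₁‖`.
  have e₁ := smul_left_injective ℝ hne h₁
  have l₁ : min 1 (R₁ / ‖g₁₁‖) < 1 := e₁.trans_lt ((div_lt_one hS).mpr hR₁)
  have k₁ : R₁ < ‖g₁₁‖ :=
    (div_lt_one ha).mp ((min_lt_iff.mp l₁).resolve_left (lt_irrefl 1))
  -- Sample 2 is unchanged, which forces `‖g₂₁‖ ≤ R₁`.
  have e₂ : min 1 (R₁ / ‖g₂₁‖) = 1 :=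
    smul_left_injective ℝ (norm_pos_iff.mp hb) (h₂.trans (one_smul ℝ g₂₁).symm)
  have k₂ : ‖g₂₁‖ ≤ R₁ := (one_le_div hb).mp (min_eq_left_iff.mp e₂)
  linarith
end

section
/- Let R > 0, let I be an index set of samples, and for each i ∈ I let g_i = (g_i^{(1)},…,g_i^{(M)}) be a per-sample gradient over M groups with g_i^{(m)} in a real inner product space E_m. Suppose R < ‖g_i‖ for every i ∈ I (every sample is clipped by all-layer Abadi clipping), that g_i^{(m)} ≠ 0 for all i and m, and that group-wise Abadi clipping with thresholds R_1,…,R_M ≥ 0 reproduces all-layer Abadi clipping, i.e. min(1, R_m/‖g_i^{(m)}‖)·g_i^{(m)} = (R/‖g_i‖)·g_i^{(m)} for all i ∈ I and all m. Then for all i, j ∈ I and all m, one has ‖g_i^{(m)}‖/‖g_i‖ = ‖g_j^{(m)}‖/‖g_j‖. -/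
/-!
Since `g i m ≠ 0`, equality of the two clipped components is equality of the scalar factors:
`min 1 (R_m / ‖g i m‖) = R / ‖g i‖`. Every sample is clipped, so the right-hand side is less
than `1` and the minimum must be `R_m / ‖g i m‖`. Rearranging, `‖g i m‖ / ‖g i‖ = R_m / R`,
which does not depend on the sample `i`.
-/

/-- **Necessary condition for group-wise Abadi clipping to reproduce all-layer Abadi
clipping** when every sample is clipped (`R < ‖g i‖`) and every group component is nonzero:
the norm ratios `‖g i m‖/‖g i‖` must agree across samples. -/
theorem stmt_4 {M : ℕ} {E : Fin M → Type*} [∀ m, NormedAddCommGroup (E m)]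
    [∀ m, InnerProductSpace ℝ (E m)] {I : Type*} (R : ℝ) (hR : 0 < R)
    (g : I → ∀ m, E m)
    (hclip : ∀ i : I, R < Real.sqrt (∑ m, ‖g i m‖ ^ 2))
    (hne : ∀ (i : I) (m : Fin M), g i m ≠ 0)
    (Rs : Fin M → ℝ) (hRs : ∀ m, 0 ≤ Rs m)
    (hrep : ∀ (i : I) (m : Fin M),
      min 1 (Rs m / ‖g i m‖) • g i m
        = (R / Real.sqrt (∑ m', ‖g i m'‖ ^ 2)) • g i m) :
    ∀ (i j : I) (m : Fin M),
      ‖g i m‖ / Real.sqrt (∑ m', ‖g i m'‖ ^ 2)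
        = ‖g j m‖ / Real.sqrt (∑ m', ‖g j m'‖ ^ 2) := by
  have key : ∀ (i : I) (m : Fin M),
      ‖g i m‖ / Real.sqrt (∑ m', ‖g i m'‖ ^ 2) = Rs m / R := by
    intro i m
    have hN := hclip i
    have h := smul_left_injective ℝ (hne i m) (hrep i m)
    have hg : 0 < ‖g i m‖ := norm_pos_iff.mpr (hne i m)
    generalize Real.sqrt (∑ m', ‖g i m'‖ ^ 2) = N at hN h ⊢
    have hN0 : 0 < N := hR.trans hN
    have hlt : R / N < 1 := (div_lt_one hN0).mpr hN
    -- The all-layer factor is below `1`, so the minimum is attained by its second argument.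
    have h2 : Rs m / ‖g i m‖ = R / N := by
      rcases min_choice 1 (Rs m / ‖g i m‖) with h1 | h1
      · exact absurd (h1.symm.trans h) hlt.ne'
      · exact h1.symm.trans h
    rw [div_eq_div_iff hg.ne' hN0.ne'] at h2
    rw [div_eq_div_iff hN0.ne' hR.ne']
    linarith
  intro i j m
  rw [key i m, key j m]
end

section
/- Fix r > 1, a ≥ 0, γ > 0 and let 𝓜(x) = 𝓜(x; r, a, γ). Then 𝓜(0) = 0; 𝓜(x) > 0 for every x > 0; 𝓜 is strictly increasing on [0, ∞); and 𝓜(x) < 2γ/(r²−1) for every x ≥ 0. -/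
/-!
Put `t = x + a`. Combining the two fractions gives the factorization
`𝓜(x) = 2γ · x / ((r-1)t + γ) · t / ((r+1)t + γ)` (`clipM_eq`). On `[0, ∞)` both quotients are
nonnegative, strictly increasing (`quot_lt_quot`), and bounded strictly by `1/(r-1)` and `1/(r+1)`
(`quot_lt_inv`), so every claim follows by multiplying the factors.
-/

/-- The distance-measure function `𝓜(x; r, a, γ)` from the paper's convergence analysis. -/
noncomputable def clipM (r a γ x : ℝ) : ℝ :=
  x * (γ / ((r - 1) * (x + a) + γ) - γ / ((r + 1) * (x + a) + γ))

/-- With `b = a` and `b = 0` respectively (the latter at `x + a`), this covers both quotients in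
`clipM_eq`. -/
lemma quot_lt_quot {p b γ x y : ℝ} (hp : 0 < p) (hb : 0 ≤ b) (hγ : 0 < γ) (hx : 0 ≤ x)
    (hxy : x < y) : x / (p * (x + b) + γ) < y / (p * (y + b) + γ) := by
  have hy : 0 ≤ y := hx.trans hxy.le
  rw [div_lt_div_iff₀ (by positivity) (by positivity)]
  -- The difference of the two sides is `(y - x) * (p * b + γ)`.
  nlinarith [mul_pos (sub_pos.2 hxy) (by positivity : 0 < p * b + γ)]

lemma quot_lt_inv {p b γ x : ℝ} (hp : 0 < p) (hb : 0 ≤ b) (hγ : 0 < γ) (hx : 0 ≤ x) :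
    x / (p * (x + b) + γ) < 1 / p := by
  rw [div_lt_div_iff₀ (by positivity) hp]
  nlinarith [mul_nonneg hp.le hb]

lemma clipM_eq {r a γ x : ℝ} (hr : 1 < r) (ha : 0 ≤ a) (hγ : 0 < γ) (hx : 0 ≤ x) :
    clipM r a γ x = 2 * γ *
      (x / ((r - 1) * (x + a) + γ) * ((x + a) / ((r + 1) * ((x + a) + 0) + γ))) := by
  have h1 : 0 < r - 1 := by linarith
  have h2 : 0 < r + 1 := by linarith
  have hA : (r - 1) * (x + a) + γ ≠ 0 := by positivity
  have hB : (r + 1) * (x + a) + γ ≠ 0 := by positivity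
  unfold clipM
  rw [add_zero, div_sub_div _ _ hA hB, div_mul_div_comm]
  ring

/-- **Basic properties of `𝓜`**: for `r > 1`, `a ≥ 0`, `γ > 0`, one has `𝓜(0) = 0`;
`𝓜(x) > 0` for `x > 0`; `𝓜` is strictly increasing on `[0, ∞)`; and
`𝓜(x) < 2γ/(r²−1)` for every `x ≥ 0`. -/
theorem stmt_6 (r a γ : ℝ) (hr : 1 < r) (ha : 0 ≤ a) (hγ : 0 < γ) :
    clipM r a γ 0 = 0 ∧
    (∀ x : ℝ, 0 < x → 0 < clipM r a γ x) ∧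
    StrictMonoOn (clipM r a γ) (Set.Ici 0) ∧
    (∀ x : ℝ, 0 ≤ x → clipM r a γ x < 2 * γ / (r ^ 2 - 1)) := by
  have h1 : 0 < r - 1 := by linarith
  have h2 : 0 < r + 1 := by linarith
  refine ⟨by simp [clipM], fun x hx => ?_, fun x hx y hy hxy => ?_, fun x hx => ?_⟩
  · rw [clipM_eq hr ha hγ hx.le]
    positivity
  · rw [Set.mem_Ici] at hx hy
    rw [clipM_eq hr ha hγ hx, clipM_eq hr ha hγ hy]
    refine mul_lt_mul_of_pos_left ?_ (by positivity)
    exact mul_lt_mul'' (quot_lt_quot h1 ha hγ hx hxy)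
      (quot_lt_quot h2 le_rfl hγ (by positivity) (by linarith)) (by positivity) (by positivity)
  · rw [clipM_eq hr ha hγ hx]
    have key := mul_lt_mul'' (quot_lt_inv h1 ha hγ hx)
      (quot_lt_inv h2 le_rfl hγ (add_nonneg hx ha)) (by positivity) (by positivity)
    have e : 2 * γ / (r ^ 2 - 1) = 2 * γ * (1 / (r - 1) * (1 / (r + 1))) := by
      rw [show r ^ 2 - 1 = (r - 1) * (r + 1) by ring, div_mul_div_comm, one_mul, mul_one_div]
    rw [e]
    exact mul_lt_mul_of_pos_left key (by positivity)
end

section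
/- Fix r > 1, a > 0, γ > 0 and let 𝓜(x) = 𝓜(x; r, a, γ) and 𝓜⁻¹(y) = 𝓜⁻¹(y; r, a, γ). Then for every x ≥ 0 one has 𝓜⁻¹(𝓜(x)) = x; in particular the denominator 2γ − (r²−1)·𝓜(x) is strictly positive for all x ≥ 0. -/
/-- The explicit inverse `𝓜⁻¹(y; r, a, γ)` of the paper's Lemma 2. -/
noncomputable def clipMinv (r a γ y : ℝ) : ℝ :=
  (-(a * γ) + (r ^ 2 - 1) * a * y + r * γ * y
      + γ * Real.sqrt (a ^ 2 + 2 * r * a * y + 2 * γ * y + y ^ 2))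
    / (2 * γ - (r ^ 2 - 1) * y)

/-- **`𝓜⁻¹` is a left inverse of `𝓜` on `[0, ∞)`**: for `r > 1`, `a > 0`, `γ > 0` and every
`x ≥ 0`, `𝓜⁻¹(𝓜(x)) = x`; in particular the denominator `2γ − (r²−1)·𝓜(x)` is strictly
positive. -/
theorem stmt_7 (r a γ : ℝ) (hr : 1 < r) (ha : 0 < a) (hγ : 0 < γ) :
    ∀ x : ℝ, 0 ≤ x →
      clipMinv r a γ (clipM r a γ x) = x ∧ 0 < 2 * γ - (r ^ 2 - 1) * clipM r a γ x := by
  intro x hx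
  have hs : 0 < x + a := by linarith
  have hA : 0 < (r - 1) * (x + a) + γ := by
    have := mul_pos (sub_pos.2 hr) hs
    linarith
  have hB : 0 < (r + 1) * (x + a) + γ := by positivity
  have hr2 : 0 < r ^ 2 - 1 := by nlinarith
  -- The two factors are kept as atoms so that `field_simp` recognises them as nonzero.
  generalize hAe : (r - 1) * (x + a) + γ = A at hA
  generalize hBe : (r + 1) * (x + a) + γ = B at hB
  have hy : clipM r a γ x
      = 2 * γ * x * (x + a) / (A * B) := by
    rw [clipM, hAe, hBe]
    field_simp
    subst hAe hBe
    ring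
  have hD : 2 * γ - (r ^ 2 - 1) * clipM r a γ x
      = 2 * γ * ((r ^ 2 - 1) * (x + a) * a + 2 * r * γ * (x + a) + γ ^ 2)
        / (A * B) := by
    rw [hy]
    field_simp
    subst hAe hBe
    ring
  have hDpos : 0 < 2 * γ - (r ^ 2 - 1) * clipM r a γ x := by
    rw [hD]
    positivity
  refine ⟨?_, hDpos⟩
  have hsq : Real.sqrt (a ^ 2 + 2 * r * a * clipM r a γ x + 2 * γ * clipM r a γ x
        + clipM r a γ x ^ 2)
      = a + (2 * r * γ * x * (x + a) + 2 * γ ^ 2 * x)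
        / (A * B) := by
    rw [Real.sqrt_eq_iff_mul_self_eq_of_pos (by positivity), hy]
    field_simp
    subst hAe hBe
    ring
  unfold clipMinv
  rw [div_eq_iff hDpos.ne', hsq, hy]
  field_simp
  subst hAe hBe
  ring
end

section
/- Fix integers T ≥ 1, B ≥ 1, M ≥ 1, d ≥ 1, and reals 𝓛 > 0, σ ≥ 0, ξ ≥ 0, γ > 0, r > 1, L* and L₀ with L₀ > L*. Set η₀ := √( 2(L₀ − L*) / (𝓛·(1 + σ²d/B²)) ) and η := η₀/(B√T). Let D_0, D_1, …, D_{T−1} be nonnegative real numbers (D_t represents E[Σ_m 𝓜(‖g_t^{(m)}‖ − ξ/(r√M); r, ξ/(r√M), γ)]) and let ℓ_0, ℓ_1, …, ℓ_T be real numbers with ℓ_0 = L₀, ℓ_T ≥ L*, and for each t < T: ℓ_{t+1} − ℓ_t ≤ −( Bη / (2√M) )·D_t + (𝓛η²/2)·( B² + σ²d ). Then min_{0 ≤ t < T} D_t ≤ 2·√(M/T)·√( 2(L₀ − L*)·𝓛·(1 + σ²d/B²) ). -/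
/-!
Write `Δ = L₀ - L*` and `A = 1 + σ²d/B²`, and let `K` be the claimed bound. The learning rate is
tuned so that the noise term of the one-step inequality is exactly `Δ / T` (`noise_term_eq`), while
the descent coefficient times `K` is exactly `2Δ / T` (`descent_term_eq`). If every `D t` exceeded
`K`, each step would therefore lower the loss by strictly more than `Δ / T`, and after `T` steps the
loss would be below `L*`.
-/

lemma noise_term_eq {T B 𝓛 s Δ η₀ : ℝ} (hT : 0 < T) (hB : 0 < B)
    (h𝓛 : 0 < 𝓛) (hs : 0 ≤ s) (hη₀ : η₀ ^ 2 = 2 * Δ / (𝓛 * (1 + s / B ^ 2))) :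
    (𝓛 * (η₀ / (B * √T)) ^ 2 / 2) * (B ^ 2 + s) = Δ / T := by
  have hA : 0 < B ^ 2 + s := by positivity
  rw [div_pow, mul_pow, Real.sq_sqrt hT.le, hη₀]
  field_simp

lemma descent_term_eq {T B M η₀ S Δ : ℝ} (hT : 0 < T) (hB : 0 < B) (hM : 0 < M)
    (hS : η₀ * S = 2 * Δ) :
    (B * (η₀ / (B * √T)) / (2 * √M)) * (2 * √(M / T) * S) = 2 * Δ / T := by
  have hT' : 0 < √T := Real.sqrt_pos.2 hT
  have hM' : 0 < √M := Real.sqrt_pos.2 hM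
  calc (B * (η₀ / (B * √T)) / (2 * √M)) * (2 * √(M / T) * S)
      = η₀ * S / (√T) ^ 2 := by
        rw [Real.sqrt_div hM.le]
        field_simp
    _ = 2 * Δ / T := by rw [Real.sq_sqrt hT.le, hS]


/-- **Telescoping step of the DP-SGD convergence proof.** With base learning rate
`η₀ = √(2(L₀−L*)/(𝓛(1+σ²d/B²)))` and `η = η₀/(B√T)`, if the nonnegative quantities `D t`
(representing `E[∑ₘ 𝓜(‖g_t⁽ᵐ⁾‖ − ξ/(r√M))]`) and the expected losses `ℓ t` satisfy the
one-step expected-improvement inequality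
`ℓ (t+1) − ℓ t ≤ −(Bη/(2√M))·D t + (𝓛η²/2)(B² + σ²d)` for all `t < T`, with `ℓ 0 = L₀`
and `ℓ T ≥ L*`, then `min_{t<T} D t ≤ 2·√(M/T)·√(2(L₀−L*)𝓛(1+σ²d/B²))`. -/
theorem stmt_11 (T B M d : ℕ) (hT : 1 ≤ T) (hB : 1 ≤ B) (hM : 1 ≤ M) (hd : 1 ≤ d)
    (𝓛 σ ξ γ r Lstar L₀ : ℝ) (h𝓛 : 0 < 𝓛) (hσ : 0 ≤ σ) (hξ : 0 ≤ ξ) (hγ : 0 < γ)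
    (hr : 1 < r) (hL : Lstar < L₀)
    (η₀ η : ℝ)
    (hη₀ : η₀ = Real.sqrt (2 * (L₀ - Lstar) / (𝓛 * (1 + σ ^ 2 * d / (B : ℝ) ^ 2))))
    (hη : η = η₀ / (B * Real.sqrt T))
    (D : ℕ → ℝ) (hD : ∀ t < T, 0 ≤ D t)
    (ℓ : ℕ → ℝ) (hℓ₀ : ℓ 0 = L₀) (hℓT : Lstar ≤ ℓ T)
    (hstep : ∀ t < T,
      ℓ (t + 1) - ℓ t ≤
        -(B * η / (2 * Real.sqrt M)) * D t
          + (𝓛 * η ^ 2 / 2) * ((B : ℝ) ^ 2 + σ ^ 2 * d)) :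
    ∃ t < T, D t ≤
      2 * Real.sqrt ((M : ℝ) / T)
        * Real.sqrt (2 * (L₀ - Lstar) * 𝓛 * (1 + σ ^ 2 * d / (B : ℝ) ^ 2)) := by
  have hT' : (0 : ℝ) < T := by exact_mod_cast hT
  have hB' : (0 : ℝ) < B := by exact_mod_cast hB
  have hM' : (0 : ℝ) < M := by exact_mod_cast hM
  have hΔ : 0 < L₀ - Lstar := sub_pos.2 hL
  have hA : 0 < 1 + σ ^ 2 * d / (B : ℝ) ^ 2 := by positivity
  have hη₀pos : 0 < η₀ := by rw [hη₀]; positivity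
  have hη₀sq : η₀ ^ 2 = 2 * (L₀ - Lstar) / (𝓛 * (1 + σ ^ 2 * d / (B : ℝ) ^ 2)) := by
    rw [hη₀, Real.sq_sqrt (by positivity)]
  have hS : η₀ * √(2 * (L₀ - Lstar) * 𝓛 * (1 + σ ^ 2 * d / (B : ℝ) ^ 2))
      = 2 * (L₀ - Lstar) := by
    -- The product of the two radicands is `(2 * (L₀ - Lstar)) ^ 2`.
    rw [hη₀, ← Real.sqrt_mul (by positivity), Real.sqrt_eq_iff_mul_self_eq (by positivity)
      (by positivity)]
    generalize 1 + σ ^ 2 * d / (B : ℝ) ^ 2 = A at hA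
    field_simp
  have hnoise := noise_term_eq (s := σ ^ 2 * d) hT' hB' h𝓛 (by positivity) hη₀sq
  have hdesc := descent_term_eq hT' hB' hM' hS
  rw [← hη] at hnoise hdesc
  have hc : 0 < B * η / (2 * √M) := by rw [hη]; positivity
  by_contra! hcon
  have hdrop : ∀ t ∈ Finset.range T, ℓ (t + 1) - ℓ t < -((L₀ - Lstar) / T) := by
    intro t ht
    have htT := Finset.mem_range.1 ht
    have h1 := hstep t htT
    have h2 := mul_lt_mul_of_pos_left (hcon t htT) hc
    rw [hdesc, mul_div_assoc] at h2
    rw [hnoise] at h1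
    linarith
  have hsum := Finset.sum_lt_sum_of_nonempty (Finset.nonempty_range_iff.2 (by omega)) hdrop
  rw [Finset.sum_range_sub, Finset.sum_const, Finset.card_range, nsmul_eq_mul, mul_neg,
    mul_div_cancel₀ _ hT'.ne'] at hsum
  linarith
end
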